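/- arXiv:2507.17967 — 2 statements merged into one kernel-verified Lean document; each statement's English description precedes it below -/
import Mathlib

section
/- Let n ≥ 1 be an integer and let x, y, z be integers such that either x³ − 7x²y + 7xy² + 7y³ = 7k·zⁿ for some k ∈ {1, 8}, or x³ − 4x²y + 3xy² + y³ = 7zⁿ. Then there exist integers a, b, c with c = z² and a² + 196b³ = −27cⁿ, and moreover: (a) if (x, y) ≠ (0, 0), then a ≠ 0 and for every prime p with p mod 7 ∈ {2, 3, 4, 5} (i.e. p ≢ 0, ±1 (mod 7)), the p-adic valuation of a is divisible by 3; (b) if gcd(x, y) = 1 and n > 4, then gcd(c, 42ab) = 1. -/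
/-!
Let `F(u, v) = u³ - 4u²v + 3uv² + v³`, a norm form of the cubic field `ℚ(ζ₇)⁺`. Since
`x³ - 7x²y + 7xy² + 7y³ = F(x - 5y, -2y)`, every case reduces to `F(u, v) = 7zⁿ`. The covariants of
a binary cubic form satisfy a syzygy, which here reads
`F(6v - 3u, 3v - 2u)² + 27 F(u, v)² = 28 Q(u, v)³` with `Q(u, v) = u² - 3uv + 3v²`; as
`F ≡ (u + v)³ (mod 7)`, both `F(6v - 3u, 3v - 2u) = 7a` and `Q(u, v) = -7b` are divisible by `7`,
and dividing by `49` gives `a² + 196b³ = -27z²ⁿ`.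

A prime `p ≢ 0, ±1 (mod 7)` is inert in `ℚ(ζ₇)⁺`, so it divides `F(u, v)` only if it divides both
`u` and `v`. Hence its exponent in any nonzero value of `F`, in particular in `7a`, is a multiple
of `3`. If `u` and `v` are coprime, then `2`, `3` and `7` do not divide `z`, and as `F` and `Q` have
resultant `7`, no prime divides both `z` and `b`.
-/

open Polynomial

section FiniteField

variable {K : Type*} [Field K]

theorem eq_or_eq_inv_of_add_inv_eq {a b : K} (ha : a ≠ 0) (hb : b ≠ 0)
    (h : a + a⁻¹ = b + b⁻¹) : a = b ∨ a = b⁻¹ := by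
  have hprod : (a - b) * (a * b - 1) = 0 := by
    field_simp at h
    linear_combination h
  refine (mul_eq_zero.mp hprod).imp sub_eq_zero.mp fun hab ↦ ?_
  exact eq_inv_of_mul_eq_one_left (sub_eq_zero.mp hab)

theorem exists_add_inv_eq [IsAlgClosed K] (θ : K) :
    ∃ ζ : K, ζ ≠ 0 ∧ ζ + ζ⁻¹ = θ := by
  have hdeg : (X ^ 2 - C θ * X + 1 : K[X]).degree = 2 := by compute_degree!
  obtain ⟨ζ, hroot⟩ := IsAlgClosed.exists_root (X ^ 2 - C θ * X + 1 : K[X]) (by simp [hdeg])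
  have hζ : ζ ^ 2 - θ * ζ + 1 = 0 := by simpa using hroot
  have hζ0 : ζ ≠ 0 := by
    rintro rfl
    simp at hζ
  refine ⟨ζ, hζ0, ?_⟩
  field_simp
  linear_combination hζ

theorem isPrimitiveRoot_seven_of_add_inv_root (h7 : (7 : K) ≠ 0) {ζ : K}
    (hζ : ζ ≠ 0) (h : (ζ + ζ⁻¹) ^ 3 + (ζ + ζ⁻¹) ^ 2 - 2 * (ζ + ζ⁻¹) - 1 = 0) :
    IsPrimitiveRoot ζ 7 := by
  have : NeZero ((7 : ℕ) : K) := ⟨h7⟩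
  have : Fact (Nat.Prime 7) := ⟨by norm_num⟩
  rw [← isRoot_cyclotomic_iff, cyclotomic_prime, IsRoot, eval_geom_sum]
  simp only [Finset.sum_range_succ, Finset.sum_range_zero]
  field_simp at h
  linear_combination h

-- Frobenius fixes `θ = ζ + ζ⁻¹`, so it sends the seventh root of unity `ζ` to `ζ` or `ζ⁻¹`.
theorem card_mod_seven_of_root [Fintype K] {θ : K}
    (hθ : θ ^ 3 + θ ^ 2 - 2 * θ - 1 = 0) :
    Fintype.card K % 7 = 0 ∨ Fintype.card K % 7 = 1 ∨ Fintype.card K % 7 = 6 := by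
  by_cases h7 : (7 : K) = 0
  · have : Fact (Nat.Prime 7) := ⟨by norm_num⟩
    have hchar : ringChar K = 7 := CharP.ringChar_of_prime_eq_zero Fact.out h7
    exact .inl (Nat.mod_eq_zero_of_dvd ((prime_dvd_char_iff_dvd_card 7).mp hchar.symm.dvd))
  right
  let L := AlgebraicClosure K
  obtain ⟨ζ, hζ0, hζθ⟩ := exists_add_inv_eq (algebraMap K L θ)
  have hζ : IsPrimitiveRoot ζ 7 := by
    refine isPrimitiveRoot_seven_of_add_inv_root ?_ hζ0 ?_
    · simpa only [map_ofNat] using (map_ne_zero (algebraMap K L)).mpr h7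
    · simpa [hζθ, map_ofNat] using congrArg (algebraMap K L) hθ
  have hfrob : ζ ^ Fintype.card K + (ζ ^ Fintype.card K)⁻¹ = ζ + ζ⁻¹ := by
    rw [hζθ]
    simpa using (map_add (FiniteField.frobeniusAlgHom K L) ζ ζ⁻¹).symm.trans
      ((congrArg _ hζθ).trans (AlgHom.commutes _ θ))
  have hinv : ζ⁻¹ = ζ ^ 6 := inv_eq_of_mul_eq_one_right (by rw [← pow_succ', hζ.pow_eq_one])
  have hmod (k : ℕ) (h : ζ ^ Fintype.card K = ζ ^ k) : Fintype.card K % 7 = k % 7 := by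
    rwa [(hζ.isOfFinOrder (by norm_num)).pow_eq_pow_iff_modEq, ← hζ.eq_orderOf] at h
  exact (eq_or_eq_inv_of_add_inv_eq (pow_ne_zero _ hζ0) hζ0 hfrob).imp
    (fun h ↦ hmod 1 (by rw [h, pow_one])) fun h ↦ hmod 6 (by rw [h, hinv])

end FiniteField

section NormForm

variable {R : Type*} [CommRing R]

/-- The binary cubic form `F(u, v) = N(u - vα)`, where `α = 1 - (ζ₇ + ζ₇⁻¹)` generates
`ℚ(ζ₇)⁺`. -/
def normForm (u v : R) : R :=
  u ^ 3 - 4 * u ^ 2 * v + 3 * u * v ^ 2 + v ^ 3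

/-- The quadratic covariant (Hessian) of `normForm`, divided by `7`. -/
def hessianForm (u v : R) : R :=
  u ^ 2 - 3 * u * v + 3 * v ^ 2

/-- The cubic covariant of `normForm`, divided by `7`. It is again a value of `normForm`, at the
image of `(u, v)` under a linear map whose square is `-3`. -/
def cubicCovariant (u v : R) : R :=
  normForm (6 * v - 3 * u) (3 * v - 2 * u)

theorem normForm_mul_mul (c u v : R) : normForm (c * u) (c * v) = c ^ 3 * normForm u v := by
  unfold normForm
  ring

theorem normForm_sub_five_mul (x y : R) :
    normForm (x - 5 * y) (-2 * y) = x ^ 3 - 7 * x ^ 2 * y + 7 * x * y ^ 2 + 7 * y ^ 3 := by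
  unfold normForm
  ring

theorem normForm_eq_add_pow_three_sub (u v : R) :
    normForm u v = (u + v) ^ 3 - 7 * (u ^ 2 * v) := by
  unfold normForm
  ring

theorem cubicCovariant_sq_add (u v : R) :
    cubicCovariant u v ^ 2 + 27 * normForm u v ^ 2 = 28 * hessianForm u v ^ 3 := by
  unfold cubicCovariant normForm hessianForm
  ring

theorem dvd_seven_of_dvd_normForm_of_dvd_hessianForm {p u v : R} (hp : Prime p)
    (huv : IsCoprime u v) (hF : p ∣ normForm u v) (hQ : p ∣ hessianForm u v) : p ∣ 7 := by
  have hresultant : 7 * v ^ 4 = (9 * v ^ 2 - (3 * u - 5 * v) * (u - v)) * hessianForm u v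
      + (3 * u - 5 * v) * normForm u v := by
    unfold normForm hessianForm
    ring
  have h7v : p ∣ 7 * v ^ 4 := hresultant ▸ dvd_add (hQ.mul_left _) (hF.mul_left _)
  refine (hp.dvd_or_dvd h7v).resolve_right fun hv4 ↦ ?_
  have hv : p ∣ v := hp.dvd_of_dvd_pow hv4
  have hu2 : u ^ 2 = hessianForm u v - v * (3 * v - 3 * u) := by
    unfold hessianForm
    ring
  have hu : p ∣ u := hp.dvd_of_dvd_pow (hu2 ▸ dvd_sub hQ (hv.mul_right _))
  exact hp.not_isUnit (huv.isUnit_of_dvd' hu hv)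

theorem card_mod_seven_of_normForm_eq_zero {K : Type*} [Field K] [Fintype K] {u v : K}
    (hv : v ≠ 0) (h : normForm u v = 0) :
    Fintype.card K % 7 = 0 ∨ Fintype.card K % 7 = 1 ∨ Fintype.card K % 7 = 6 := by
  refine card_mod_seven_of_root (θ := 1 - u / v) ?_
  unfold normForm at h
  field_simp
  linear_combination -h

end NormForm

section InertPrime

/-- The primes that stay inert in `ℚ(ζ₇)⁺`, described by their residues modulo `7`. -/
def IsInertPrime (p : ℕ) : Prop :=
  p.Prime ∧ (p % 7 = 2 ∨ p % 7 = 3 ∨ p % 7 = 4 ∨ p % 7 = 5)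

theorem isInertPrime_two : IsInertPrime 2 :=
  ⟨Nat.prime_two, by norm_num⟩

theorem isInertPrime_three : IsInertPrime 3 :=
  ⟨Nat.prime_three, by norm_num⟩

variable {p : ℕ} {u v : ℤ}

theorem dvd_and_dvd_of_dvd_normForm (hp : IsInertPrime p) (h : (p : ℤ) ∣ normForm u v) :
    (p : ℤ) ∣ u ∧ (p : ℤ) ∣ v := by
  have : Fact p.Prime := ⟨hp.1⟩
  simp only [← ZMod.intCast_zmod_eq_zero_iff_dvd] at h ⊢
  have hF : normForm (u : ZMod p) v = 0 := by simpa [normForm] using h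
  have hv : (v : ZMod p) = 0 := by
    by_contra hv
    have hcard := card_mod_seven_of_normForm_eq_zero hv hF
    rw [ZMod.card] at hcard
    have hmod := hp.2
    omega
  exact ⟨by simpa [normForm, hv] using hF, hv⟩

theorem not_dvd_normForm_of_isCoprime (hp : IsInertPrime p) (huv : IsCoprime u v) :
    ¬(p : ℤ) ∣ normForm u v := fun h ↦
  have ⟨hu, hv⟩ := dvd_and_dvd_of_dvd_normForm hp h
  (Nat.prime_iff_prime_int.mp hp.1).not_isUnit (huv.isUnit_of_dvd' hu hv)

theorem sq_dvd_and_sq_dvd_of_pow_four_dvd_normForm (hp : IsInertPrime p)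
    (h : (p : ℤ) ^ 4 ∣ normForm u v) : (p : ℤ) ^ 2 ∣ u ∧ (p : ℤ) ^ 2 ∣ v := by
  obtain ⟨⟨u, rfl⟩, v, rfl⟩ :=
    dvd_and_dvd_of_dvd_normForm hp ((dvd_pow_self _ four_ne_zero).trans h)
  have hp0 : (p : ℤ) ≠ 0 := Nat.cast_ne_zero.mpr hp.1.ne_zero
  rw [normForm_mul_mul, pow_succ, mul_dvd_mul_iff_left (pow_ne_zero 3 hp0)] at h
  obtain ⟨hu, hv⟩ := dvd_and_dvd_of_dvd_normForm hp h
  rw [sq]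
  exact ⟨mul_dvd_mul_left _ hu, mul_dvd_mul_left _ hv⟩

theorem exists_normForm_eq_pow_three_mul (huv : u ≠ 0 ∨ v ≠ 0) :
    ∃ g u' v' : ℤ, g ≠ 0 ∧ IsCoprime u' v' ∧ normForm u v = g ^ 3 * normForm u' v' := by
  have hgcd : 0 < Int.gcd u v := Int.gcd_pos_iff.mpr huv
  obtain ⟨u', v', hcop, hu, hv⟩ := Int.exists_gcd_one hgcd
  refine ⟨Int.gcd u v, u', v', by exact_mod_cast hgcd.ne',
    Int.isCoprime_iff_gcd_eq_one.mpr hcop, ?_⟩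
  rw [← normForm_mul_mul, mul_comm _ u', mul_comm _ v', ← hu, ← hv]

theorem normForm_ne_zero (huv : u ≠ 0 ∨ v ≠ 0) : normForm u v ≠ 0 := by
  obtain ⟨g, u', v', hg, hcop, hF⟩ := exists_normForm_eq_pow_three_mul huv
  have hF' : normForm u' v' ≠ 0 := fun h ↦
    not_dvd_normForm_of_isCoprime isInertPrime_two hcop (h ▸ dvd_zero _)
  exact hF ▸ mul_ne_zero (pow_ne_zero 3 hg) hF'

theorem three_dvd_padicValInt_normForm (hp : IsInertPrime p) (huv : u ≠ 0 ∨ v ≠ 0) :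
    3 ∣ padicValInt p (normForm u v) := by
  have : Fact p.Prime := ⟨hp.1⟩
  obtain ⟨g, u', v', hg, hcop, hF⟩ := exists_normForm_eq_pow_three_mul huv
  have hF' : ¬(p : ℤ) ∣ normForm u' v' := not_dvd_normForm_of_isCoprime hp hcop
  have hval : padicValInt p (g ^ 3) = 3 * padicValInt p g := by
    simp [padicValInt, Int.natAbs_pow, padicValNat.pow]
  have hF'0 : normForm u' v' ≠ 0 := normForm_ne_zero hcop.ne_zero_or_ne_zero
  rw [hF, padicValInt.mul (pow_ne_zero 3 hg) hF'0, padicValInt.eq_zero_of_not_dvd hF', add_zero,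
    hval]
  exact dvd_mul_right _ _

theorem padicValInt_seven_mul (hp : IsInertPrime p) {a : ℤ} (ha : a ≠ 0) :
    padicValInt p (7 * a) = padicValInt p a := by
  have : Fact p.Prime := ⟨hp.1⟩
  have h7 : ¬(p : ℤ) ∣ 7 := by
    rw [← Nat.cast_ofNat, Int.natCast_dvd_natCast, Nat.prime_dvd_prime_iff_eq hp.1 (by norm_num)]
    have hmod := hp.2
    omega
  rw [padicValInt.mul (by norm_num) ha, padicValInt.eq_zero_of_not_dvd h7, zero_add]

end InertPrime

section ModSeven

variable {u v : ℤ}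

theorem prime_seven_int : Prime (7 : ℤ) := by norm_num

theorem seven_dvd_add_of_dvd_normForm (h : 7 ∣ normForm u v) : 7 ∣ u + v := by
  rw [normForm_eq_add_pow_three_sub, dvd_sub_left (dvd_mul_right _ _)] at h
  exact prime_seven_int.dvd_of_dvd_pow h

theorem seven_dvd_hessianForm (h : 7 ∣ normForm u v) : 7 ∣ hessianForm u v := by
  have hQ : hessianForm u v = (u + v) * (u - 4 * v) + 7 * v ^ 2 := by
    unfold hessianForm
    ring
  exact hQ ▸ dvd_add ((seven_dvd_add_of_dvd_normForm h).mul_right _) (dvd_mul_right _ _)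

theorem seven_dvd_cubicCovariant (h : 7 ∣ normForm u v) : 7 ∣ cubicCovariant u v := by
  have hsq : cubicCovariant u v ^ 2 = 28 * hessianForm u v ^ 3 - 27 * normForm u v ^ 2 :=
    eq_sub_of_add_eq (cubicCovariant_sq_add u v)
  refine prime_seven_int.dvd_of_dvd_pow (n := 2) ?_
  exact hsq ▸ dvd_sub ((seven_dvd_hessianForm h).pow three_ne_zero |>.mul_left _)
    ((h.pow two_ne_zero).mul_left _)

theorem not_sq_seven_dvd_normForm (huv : IsCoprime u v) : ¬7 ^ 2 ∣ normForm u v := by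
  intro h
  have hadd : 7 ∣ u + v := seven_dvd_add_of_dvd_normForm ((dvd_pow_self 7 two_ne_zero).trans h)
  have hcube : 7 ^ 2 ∣ (u + v) ^ 3 :=
    (pow_dvd_pow 7 (by norm_num)).trans (pow_dvd_pow_of_dvd hadd 3)
  have hprod : 7 ∣ u ^ 2 * v := by
    rwa [normForm_eq_add_pow_three_sub, dvd_sub_right hcube, sq,
      mul_dvd_mul_iff_left (by norm_num)] at h
  refine prime_seven_int.not_isUnit ?_
  rcases prime_seven_int.dvd_or_dvd hprod with hu2 | hv
  · have hu : 7 ∣ u := prime_seven_int.dvd_of_dvd_pow hu2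
    exact huv.isUnit_of_dvd' hu ((dvd_add_right hu).mp hadd)
  · exact huv.isUnit_of_dvd' ((dvd_add_left hv).mp hadd) hv

end ModSeven

section FermatEquation

variable {n : ℕ} {u v x y z a b : ℤ}

theorem isCoprime_fortyTwo_of_normForm_eq (hn : n ≠ 0) (h : normForm u v = 7 * z ^ n)
    (huv : IsCoprime u v) : IsCoprime z 42 := by
  have hdvd {q : ℤ} (hq : q ∣ z) : 7 * q ∣ normForm u v :=
    h ▸ mul_dvd_mul_left 7 (dvd_pow hq hn)
  have h2 : ¬2 ∣ z := fun hz ↦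
    not_dvd_normForm_of_isCoprime isInertPrime_two huv (dvd_of_mul_left_dvd (hdvd hz))
  have h3 : ¬3 ∣ z := fun hz ↦
    not_dvd_normForm_of_isCoprime isInertPrime_three huv (dvd_of_mul_left_dvd (hdvd hz))
  have h7 : ¬7 ∣ z := fun hz ↦ not_sq_seven_dvd_normForm huv (sq (7 : ℤ) ▸ hdvd hz)
  have hmul := ((Int.prime_two.coprime_iff_not_dvd.mpr h2).mul_left
    (Int.prime_three.coprime_iff_not_dvd.mpr h3)).mul_left
    (prime_seven_int.coprime_iff_not_dvd.mpr h7)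
  exact hmul.symm

theorem isCoprime_of_hessianForm_eq (hn : n ≠ 0) (h : normForm u v = 7 * z ^ n)
    (huv : IsCoprime u v) (hb : hessianForm u v = 7 * b) : IsCoprime z b := by
  have h42 : IsCoprime z 42 := isCoprime_fortyTwo_of_normForm_eq hn h huv
  refine isCoprime_of_prime_dvd ?_ fun p hp hpz hpb ↦ ?_
  · rintro ⟨rfl, -⟩
    norm_num [Int.isUnit_iff] at h42
  · have hp7 : p ∣ 7 := dvd_seven_of_dvd_normForm_of_dvd_hessianForm hp huv
      (h ▸ (dvd_pow hpz hn).mul_left 7) (hb ▸ hpb.mul_left 7)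
    exact hp.not_isUnit (h42.isUnit_of_dvd' hpz (hp7.trans (by norm_num)))

theorem isCoprime_of_fermat_eq (hn : n ≠ 0) (h : a ^ 2 + 196 * b ^ 3 = -27 * (z ^ 2) ^ n)
    (h42 : IsCoprime z 42) (hb : IsCoprime z b) : IsCoprime z a := by
  have h196 : IsCoprime z 196 := h42.pow_right (n := 2) |>.of_isCoprime_of_dvd_right (by norm_num)
  obtain ⟨w, hw⟩ : z ∣ -27 * (z ^ 2) ^ n := ((dvd_pow_self z two_ne_zero).pow hn).mul_left _
  have ha2 : a ^ 2 = z * w + -(196 * b ^ 3) := by rw [← hw, ← h, add_neg_cancel_right]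
  refine (IsCoprime.pow_right_iff two_pos).mp (ha2 ▸ ?_)
  exact (h196.mul_right hb.pow_right).neg_right.mul_add_left_right w

theorem fermat_eq_of_covariants (h : normForm u v = 7 * z ^ n) (ha : cubicCovariant u v = 7 * a)
    (hb : hessianForm u v = 7 * b) : a ^ 2 + 196 * (-b) ^ 3 = -27 * (z ^ 2) ^ n := by
  have hsyzygy := cubicCovariant_sq_add u v
  rw [h, ha, hb] at hsyzygy
  rw [← pow_mul, mul_comm 2 n, pow_mul]
  linarith

theorem ne_zero_and_three_dvd_padicValInt (ha : cubicCovariant u v = 7 * a)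
    (huv : u ≠ 0 ∨ v ≠ 0) : a ≠ 0 ∧ ∀ p, IsInertPrime p → 3 ∣ padicValInt p a := by
  have huv' : 6 * v - 3 * u ≠ 0 ∨ 3 * v - 2 * u ≠ 0 := by omega
  have hG : cubicCovariant u v ≠ 0 := normForm_ne_zero huv'
  have ha0 : a ≠ 0 := right_ne_zero_of_mul (ha ▸ hG)
  refine ⟨ha0, fun p hp ↦ ?_⟩
  rw [← padicValInt_seven_mul hp ha0, ← ha]
  exact three_dvd_padicValInt_normForm hp huv'

theorem exists_fermat_of_normForm_eq (h : normForm u v = 7 * z ^ n) :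
    ∃ a b : ℤ, a ^ 2 + 196 * b ^ 3 = -27 * (z ^ 2) ^ n ∧
      (u ≠ 0 ∨ v ≠ 0 → a ≠ 0 ∧ ∀ p, IsInertPrime p → 3 ∣ padicValInt p a) ∧
      (n ≠ 0 → IsCoprime u v → IsCoprime (z ^ 2) (42 * a * b)) := by
  have h7 : 7 ∣ normForm u v := ⟨z ^ n, h⟩
  obtain ⟨a, ha⟩ := seven_dvd_cubicCovariant h7
  obtain ⟨b, hb⟩ := seven_dvd_hessianForm h7
  have hab := fermat_eq_of_covariants h ha hb
  refine ⟨a, -b, hab, ne_zero_and_three_dvd_padicValInt ha, fun hn huv ↦ ?_⟩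
  have hz42 : IsCoprime z 42 := isCoprime_fortyTwo_of_normForm_eq hn h huv
  have hzb : IsCoprime z (-b) := (isCoprime_of_hessianForm_eq hn h huv hb).neg_right
  have hza : IsCoprime z a := isCoprime_of_fermat_eq hn hab hz42 hzb
  exact ((hz42.mul_right hza).mul_right hzb).pow_left

theorem isCoprime_sub_five_mul (hn : 3 < n) (h : normForm (x - 5 * y) (-2 * y) = 7 * z ^ n)
    (hxy : IsCoprime x y) : IsCoprime (x - 5 * y) (-2 * y) := by
  have hodd : ¬2 ∣ x - 5 * y := by
    rintro ⟨w, hw⟩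
    have hF : 2 ∣ 7 * z ^ n := by
      rw [← h, hw, neg_mul_comm, normForm_mul_mul]
      exact (dvd_pow_self 2 three_ne_zero).mul_right _
    have hz : 2 ∣ z :=
      Int.prime_two.dvd_of_dvd_pow ((Int.prime_two.dvd_or_dvd hF).resolve_left (by norm_num))
    have h16 : ((2 : ℕ) : ℤ) ^ 4 ∣ normForm (x - 5 * y) (-2 * y) :=
      h ▸ ((pow_dvd_pow_of_dvd hz 4).trans (pow_dvd_pow z hn)).mul_left 7
    have hsq := sq_dvd_and_sq_dvd_of_pow_four_dvd_normForm isInertPrime_two h16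
    have hx : 2 ∣ x := by omega
    have hy : 2 ∣ y := by omega
    exact Int.prime_two.not_isUnit (hxy.isUnit_of_dvd' hx hy)
  have h2 : IsCoprime (x - 5 * y) 2 := (Int.prime_two.coprime_iff_not_dvd.mpr hodd).symm
  have hy : IsCoprime (x - 5 * y) y := IsCoprime.sub_mul_right_left_iff.mpr hxy
  exact h2.neg_right.mul_right hy

theorem exists_normForm_eq_of_eight_mul (h : normForm (x - 5 * y) (-2 * y) = 7 * 8 * z ^ n) :
    ∃ u, x = 2 * u + 5 * y ∧ normForm u (-y) = 7 * z ^ n := by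
  have h2 : 2 ∣ normForm (x - 5 * y) (-2 * y) := ⟨7 * 4 * z ^ n, by rw [h]; ring⟩
  obtain ⟨u, hu : x - 5 * y = 2 * u⟩ := (dvd_and_dvd_of_dvd_normForm isInertPrime_two h2).1
  refine ⟨u, by linarith, ?_⟩
  rw [hu, neg_mul_comm, normForm_mul_mul] at h
  linarith

theorem exists_normForm_eq_seven_mul_pow
    (h : (∃ k : ℤ, (k = 1 ∨ k = 8) ∧
            x ^ 3 - 7 * x ^ 2 * y + 7 * x * y ^ 2 + 7 * y ^ 3 = 7 * k * z ^ n) ∨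
         x ^ 3 - 4 * x ^ 2 * y + 3 * x * y ^ 2 + y ^ 3 = 7 * z ^ n) :
    ∃ u v : ℤ, normForm u v = 7 * z ^ n ∧ (x ≠ 0 ∨ y ≠ 0 → u ≠ 0 ∨ v ≠ 0) ∧
      (3 < n → IsCoprime x y → IsCoprime u v) := by
  rcases h with ⟨k, rfl | rfl, h⟩ | h
  · rw [← normForm_sub_five_mul, mul_one] at h
    exact ⟨x - 5 * y, -2 * y, h, by omega, fun hn ↦ isCoprime_sub_five_mul hn h⟩
  · rw [← normForm_sub_five_mul] at h
    obtain ⟨u, rfl, hu⟩ := exists_normForm_eq_of_eight_mul h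
    refine ⟨u, -y, hu, by omega, fun _ hxy ↦ ?_⟩
    exact (IsCoprime.add_mul_right_left_iff.mp hxy).of_mul_left_right.neg_right
  · exact ⟨x, y, h, id, fun _ ↦ id⟩

end FermatEquation

/-- Integer solutions of `x³ − 7x²y + 7xy² + 7y³ = 7k·zⁿ` (for `k ∈ {1,8}`) or of
`x³ − 4x²y + 3xy² + y³ = 7zⁿ` give rise to solutions of `a² + 196b³ = −27cⁿ`
with `c = z²`, satisfying additional arithmetic conditions. -/
theorem norm_to_fermat_196 (n : ℕ) (hn : 1 ≤ n) (x y z : ℤ)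
    (h : (∃ k : ℤ, (k = 1 ∨ k = 8) ∧
            x ^ 3 - 7 * x ^ 2 * y + 7 * x * y ^ 2 + 7 * y ^ 3 = 7 * k * z ^ n) ∨
         x ^ 3 - 4 * x ^ 2 * y + 3 * x * y ^ 2 + y ^ 3 = 7 * z ^ n) :
    ∃ a b c : ℤ, c = z ^ 2 ∧ a ^ 2 + 196 * b ^ 3 = -27 * c ^ n ∧
      ((x, y) ≠ (0, 0) → a ≠ 0 ∧
        ∀ p : ℕ, p.Prime → (p % 7 = 2 ∨ p % 7 = 3 ∨ p % 7 = 4 ∨ p % 7 = 5) →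
          3 ∣ padicValInt p a) ∧
      (Int.gcd x y = 1 → 4 < n → Int.gcd c (42 * a * b) = 1) := by
  obtain ⟨u, v, huv, hne, hcop⟩ := exists_normForm_eq_seven_mul_pow h
  obtain ⟨a, b, hab, hval, hgcd⟩ := exists_fermat_of_normForm_eq huv
  refine ⟨a, b, z ^ 2, rfl, hab, fun hxy ↦ ?_, fun hxy hn4 ↦ ?_⟩
  · have hxy' : x ≠ 0 ∨ y ≠ 0 := by simpa [imp_iff_not_or] using hxy
    obtain ⟨ha, hp⟩ := hval (hne hxy')
    exact ⟨ha, fun p hprime hmod ↦ hp p ⟨hprime, hmod⟩⟩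
  · rw [← Int.isCoprime_iff_gcd_eq_one] at hxy ⊢
    exact hgcd (by omega) (hcop (by omega) hxy)
end

section
/- Assume the abc conjecture in the following form: for every real ε > 0 there exists a real constant K > 0 such that for all coprime positive integers A and B, one has A + B ≤ K · rad(A·B·(A+B))^(1+ε), where rad(m) denotes the product of the distinct prime factors of m. Then there exists a natural number N such that for every prime p > N, every k ∈ {1, 7, 8, 56}, and all integers x, y, z with gcd(x, y) = 1 and x³ − 7x²y + 7xy² + 7y³ = k·z^p, one has z = 1 or z = −1. -/
/-!
The cubic form `f = x³ − 7x²y + 7xy² + 7y³` has discriminant `56²`, and the classical syzygy between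
a binary cubic form and its covariants becomes `g² + 27f² = 28h³`, where `h` is quadratic and `g`
is cubic. For coprime `x`, `y` the values of `f` and `h` have bounded gcd, so when `f = k·z^p` this
is an abc triple up to a bounded factor. With `X = 28h³`, its radical is at most a constant times
`|g|·|z|·h ≤ X^(1/2 + 1/(2p) + 1/3)`. Since `1/2 + 1/3 = 5/6`, any abc exponent below `6/5` bounds
`X` once `p` is large, and then `|z|^p ≤ X` forces `|z| = 1` for `p` larger still.
-/

open UniqueFactorizationMonoid (radical radical_dvd_radical exists_dvd_pow_iff_radical_dvd)

/-- The abc conjecture for one fixed `ε`: coprime positive `A`, `B` satisfy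
`A + B ≤ K · rad(AB(A + B))^(1 + ε)` with a constant `K`. -/
def ABCBound (ε : ℝ) : Prop :=
  ∃ K : ℝ, 0 < K ∧ ∀ A B : ℕ, 0 < A → 0 < B → A.Coprime B →
    ((A + B : ℕ) : ℝ) ≤ K * ((radical (A * B * (A + B)) : ℕ) : ℝ) ^ (1 + ε)

section RealPowers

variable {X : ℝ}

lemma le_rpow_of_le_mul_rpow {C τ : ℝ} (hX : 0 < X) (hτ : τ < 1) (h : X ≤ C * X ^ τ) :
    X ≤ C ^ (1 - τ)⁻¹ := by
  have hpow : X ^ (1 - τ) ≤ C := by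
    rwa [Real.rpow_sub hX, Real.rpow_one, div_le_iff₀ (Real.rpow_pos_of_pos hX τ)]
  have hC : 0 ≤ C := (Real.rpow_nonneg hX.le _).trans hpow
  exact (Real.le_rpow_inv_iff_of_pos hX.le hC (sub_pos.2 hτ)).2 hpow

lemma natCast_le_rpow_inv {n u : ℕ} (hn : n ≠ 0) (h : (u : ℝ) ^ n ≤ X) :
    (u : ℝ) ≤ X ^ (n : ℝ)⁻¹ := by
  have hX : 0 ≤ X := (by positivity : (0 : ℝ) ≤ (u : ℝ) ^ n).trans h
  rw [Real.le_rpow_inv_iff_of_pos u.cast_nonneg hX (by positivity), Real.rpow_natCast]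
  exact h

lemma mul_mul_le_rpow {θ : ℝ} {p G H Z : ℕ} (hX : 1 ≤ X) (hp : p ≠ 0)
    (hθ : 5 / 6 + (2 * p : ℝ)⁻¹ ≤ θ) (hG : (G : ℝ) ^ 2 ≤ X) (hZ : (Z : ℝ) ^ (2 * p) ≤ X)
    (hH : (H : ℝ) ^ 3 ≤ X) : (G * Z * H : ℝ) ≤ X ^ θ := by
  have hX₀ : 0 < X := one_pos.trans_le hX
  calc (G * Z * H : ℝ)
      ≤ X ^ ((2 : ℕ) : ℝ)⁻¹ * X ^ ((2 * p : ℕ) : ℝ)⁻¹ * X ^ ((3 : ℕ) : ℝ)⁻¹ := by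
        gcongr
        exacts [natCast_le_rpow_inv two_ne_zero hG, natCast_le_rpow_inv (by positivity) hZ,
          natCast_le_rpow_inv three_ne_zero hH]
    _ = X ^ (5 / 6 + (2 * p : ℝ)⁻¹) := by
        rw [← Real.rpow_add hX₀, ← Real.rpow_add hX₀]
        push_cast
        ring_nf
    _ ≤ X ^ θ := Real.rpow_le_rpow_of_exponent_le hX hθ

end RealPowers

namespace ABCBound

variable {ε : ℝ}

lemma exists_add_le_gcd_mul (habc : ABCBound ε) (hε : 0 < ε) :
    ∃ K : ℝ, 0 < K ∧ ∀ A B : ℕ, 0 < A → 0 < B →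
      ((A + B : ℕ) : ℝ) ≤ A.gcd B * (K * ((radical (A * B * (A + B)) : ℕ) : ℝ) ^ (1 + ε)) := by
  obtain ⟨K, hK, hbound⟩ := habc
  refine ⟨K, hK, fun A B hA hB ↦ ?_⟩
  obtain ⟨A', B', hcop, hA', hB'⟩ := Nat.exists_coprime A B
  have hsum : A + B = A.gcd B * (A' + B') := by linarith
  have hrad : radical (A' * B' * (A' + B')) ≤ radical (A * B * (A + B)) := by
    refine Nat.le_of_dvd (Nat.radical_pos _) (radical_dvd_radical ?_ (by positivity))
    exact mul_dvd_mul (mul_dvd_mul (Dvd.intro _ hA'.symm) (Dvd.intro _ hB'.symm))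
      (Dvd.intro_left _ hsum.symm)
  have hA'_pos : 0 < A' := Nat.pos_of_mul_pos_right (hA' ▸ hA)
  have hB'_pos : 0 < B' := Nat.pos_of_mul_pos_right (hB' ▸ hB)
  calc ((A + B : ℕ) : ℝ) = A.gcd B * ((A' + B' : ℕ) : ℝ) := by exact_mod_cast hsum
    _ ≤ A.gcd B * (K * ((radical (A' * B' * (A' + B')) : ℕ) : ℝ) ^ (1 + ε)) := by
        gcongr
        exact hbound A' B' hA'_pos hB'_pos hcop
    _ ≤ A.gcd B * (K * ((radical (A * B * (A + B)) : ℕ) : ℝ) ^ (1 + ε)) := by gcongr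

lemma exists_add_le_of_radical_le (habc : ABCBound ε) (hε : 0 < ε) {θ : ℝ}
    (hθ : θ * (1 + ε) < 1) {c : ℝ} (hc : 0 ≤ c) (D : ℕ) :
    ∃ M : ℝ, ∀ A B : ℕ, 0 < A → 0 < B → A.gcd B ≤ D →
      ((radical (A * B * (A + B)) : ℕ) : ℝ) ≤ c * ((A + B : ℕ) : ℝ) ^ θ →
        ((A + B : ℕ) : ℝ) ≤ M := by
  obtain ⟨K, hK, hbound⟩ := habc.exists_add_le_gcd_mul hε
  refine ⟨(D * K * c ^ (1 + ε)) ^ (1 - θ * (1 + ε))⁻¹, fun A B hA hB hgcd hrad ↦ ?_⟩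
  have hX : (0 : ℝ) < ((A + B : ℕ) : ℝ) := by positivity
  refine le_rpow_of_le_mul_rpow hX hθ ?_
  calc ((A + B : ℕ) : ℝ) ≤ A.gcd B * (K * ((radical (A * B * (A + B)) : ℕ) : ℝ) ^ (1 + ε)) :=
        hbound A B hA hB
    _ ≤ D * (K * (c * ((A + B : ℕ) : ℝ) ^ θ) ^ (1 + ε)) := by gcongr
    _ = D * K * c ^ (1 + ε) * ((A + B : ℕ) : ℝ) ^ (θ * (1 + ε)) := by
        rw [Real.mul_rpow hc (by positivity), ← Real.rpow_mul hX.le]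
        ring

end ABCBound

section GeneralizedFermat

variable {a b c G F H : ℕ}

lemma gcd_generalizedFermat_le (hb : 0 < b) (hF : 0 < F)
    (h : a * G ^ 2 + b * F ^ 2 = c * H ^ 3) :
    (a * G ^ 2).gcd (b * F ^ 2) ≤ b * c * F.gcd H ^ 3 := by
  have hc : 0 < c := Nat.pos_of_mul_pos_right (h ▸ by positivity : 0 < c * H ^ 3)
  have hdvd_right : (a * G ^ 2).gcd (b * F ^ 2) ∣ b * F ^ 2 := Nat.gcd_dvd_right _ _
  have hdvd_sum : (a * G ^ 2).gcd (b * F ^ 2) ∣ c * H ^ 3 :=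
    h ▸ dvd_add (Nat.gcd_dvd_left _ _) hdvd_right
  refine Nat.le_of_dvd
    (mul_pos (mul_pos hb hc) (pow_pos (Nat.gcd_pos_of_pos_left _ hF) 3)) ?_
  rw [← Nat.pow_gcd_pow, ← Nat.gcd_mul_left]
  exact Nat.dvd_gcd (hdvd_right.trans ⟨c * F, by ring⟩) (hdvd_sum.trans ⟨b, by ring⟩)

lemma radical_generalizedFermat_le {k Z : ℕ} (p : ℕ) (ha : 0 < a) (hb : 0 < b) (hc : 0 < c)
    (hk : 0 < k) (hG : 0 < G) (hZ : 0 < Z) (hH : 0 < H) :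
    radical (a * G ^ 2 * (b * (k * Z ^ p) ^ 2) * (c * H ^ 3)) ≤ a * b * c * k * (G * Z * H) := by
  refine Nat.le_of_dvd (by positivity)
    ((exists_dvd_pow_iff_radical_dvd (by positivity)).1 ⟨2 * p + 3, ?_⟩)
  calc a * G ^ 2 * (b * (k * Z ^ p) ^ 2) * (c * H ^ 3)
      = a ^ 1 * b ^ 1 * c ^ 1 * k ^ 2 * (G ^ 2 * Z ^ (2 * p) * H ^ 3) := by ring
    _ ∣ a ^ (2 * p + 3) * b ^ (2 * p + 3) * c ^ (2 * p + 3) * k ^ (2 * p + 3) *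
          (G ^ (2 * p + 3) * Z ^ (2 * p + 3) * H ^ (2 * p + 3)) := by
        gcongr <;> omega
    _ = (a * b * c * k * (G * Z * H)) ^ (2 * p + 3) := by simp only [mul_pow]

lemma radical_generalizedFermat_le_mul_rpow {k p Z : ℕ} {θ : ℝ} (ha : 0 < a) (hb : 0 < b)
    (hk : 0 < k) (hG : 0 < G) (hZ : 0 < Z) (hp : p ≠ 0) (hθ : 5 / 6 + (2 * p : ℝ)⁻¹ ≤ θ)
    (h : a * G ^ 2 + b * (k * Z ^ p) ^ 2 = c * H ^ 3) :
    ((radical (a * G ^ 2 * (b * (k * Z ^ p) ^ 2) * (c * H ^ 3)) : ℕ) : ℝ) ≤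
      (a * b * c * k : ℕ) * ((c * H ^ 3 : ℕ) : ℝ) ^ θ := by
  have hX : 0 < c * H ^ 3 := h ▸ by positivity
  have hc : 0 < c := Nat.pos_of_mul_pos_right hX
  have hH : 0 < H := Nat.pos_of_ne_zero fun hH ↦ by simp [hH] at hX
  have hGX : G ^ 2 ≤ c * H ^ 3 :=
    (Nat.le_mul_of_pos_left _ ha).trans (h ▸ Nat.le_add_right _ _)
  have hZX : Z ^ (2 * p) ≤ c * H ^ 3 :=
    calc Z ^ (2 * p) ≤ b * k ^ 2 * Z ^ (2 * p) := Nat.le_mul_of_pos_left _ (by positivity)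
      _ = b * (k * Z ^ p) ^ 2 := by ring
      _ ≤ c * H ^ 3 := h ▸ Nat.le_add_left _ _
  have hHX : H ^ 3 ≤ c * H ^ 3 := Nat.le_mul_of_pos_left _ hc
  calc ((radical (a * G ^ 2 * (b * (k * Z ^ p) ^ 2) * (c * H ^ 3)) : ℕ) : ℝ)
      ≤ (a * b * c * k : ℕ) * (G * Z * H : ℝ) := by
        exact_mod_cast radical_generalizedFermat_le p ha hb hc hk hG hZ hH
    _ ≤ (a * b * c * k : ℕ) * ((c * H ^ 3 : ℕ) : ℝ) ^ θ := by
        gcongr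
        exact mul_mul_le_rpow (mod_cast hX) hp hθ (mod_cast hGX) (mod_cast hZX) (mod_cast hHX)

lemma ABCBound.exists_forall_generalizedFermat_cube_le {ε : ℝ} (habc : ABCBound ε)
    (hε : 0 < ε) (hε' : ε < 1 / 5) (ha : 0 < a) (hb : 0 < b) (c d m : ℕ) :
    ∃ N : ℕ, ∀ p k G H Z : ℕ, N < p → 0 < k → k ≤ m → 0 < G → 0 < Z →
      (k * Z ^ p).gcd H ≤ d → a * G ^ 2 + b * (k * Z ^ p) ^ 2 = c * H ^ 3 → c * H ^ 3 ≤ N := by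
  obtain ⟨θ, hθ, hθε⟩ : ∃ θ, 5 / 6 < θ ∧ θ < 1 / (1 + ε) :=
    exists_between ((lt_div_iff₀ (by positivity)).2 (by linarith))
  obtain ⟨n, hn⟩ := exists_nat_one_div_lt (sub_pos.2 hθ)
  obtain ⟨M, hM⟩ := habc.exists_add_le_of_radical_le hε ((lt_div_iff₀ (by positivity)).1 hθε)
    (a * b * c * m : ℕ).cast_nonneg (b * c * d ^ 3)
  refine ⟨max n ⌊M⌋₊, fun p k G H Z hp hk hkm hG hZ hgcd h ↦ le_max_of_le_right ?_⟩
  have hnp : n < p := (le_max_left _ _).trans_lt hp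
  have hθp : 5 / 6 + (2 * p : ℝ)⁻¹ ≤ θ := by
    have hle : (2 * p : ℝ)⁻¹ ≤ 1 / (n + 1) := by
      rw [← one_div]
      gcongr
      exact_mod_cast (by omega : n + 1 ≤ 2 * p)
    linarith
  have hgcd' : (a * G ^ 2).gcd (b * (k * Z ^ p) ^ 2) ≤ b * c * d ^ 3 :=
    (gcd_generalizedFermat_le hb (by positivity) h).trans (by gcongr)
  have hrad : ((radical (a * G ^ 2 * (b * (k * Z ^ p) ^ 2) * (c * H ^ 3)) : ℕ) : ℝ) ≤
      (a * b * c * m : ℕ) * ((c * H ^ 3 : ℕ) : ℝ) ^ θ :=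
    (radical_generalizedFermat_le_mul_rpow ha hb hk hG hZ (by omega) hθp h).trans (by gcongr)
  rw [← h] at hrad ⊢
  exact Nat.le_floor (hM _ _ (by positivity) (by positivity) hgcd' hrad)

theorem ABCBound.exists_forall_generalizedFermat_eq_one {ε : ℝ} (habc : ABCBound ε)
    (hε : 0 < ε) (hε' : ε < 1 / 5) (ha : 0 < a) (hb : 0 < b) (c d m : ℕ) :
    ∃ N : ℕ, ∀ p k G H Z : ℕ, N < p → 0 < k → k ≤ m → 0 < G → 0 < Z →
      (k * Z ^ p).gcd H ≤ d → a * G ^ 2 + b * (k * Z ^ p) ^ 2 = c * H ^ 3 → Z = 1 := by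
  obtain ⟨N, hN⟩ := habc.exists_forall_generalizedFermat_cube_le hε hε' ha hb c d m
  refine ⟨N, fun p k G H Z hp hk hkm hG hZ hgcd h ↦ ?_⟩
  by_contra hZ₁
  have hZp : Z ^ p ≤ N :=
    calc Z ^ p ≤ k * Z ^ p := Nat.le_mul_of_pos_left _ hk
      _ ≤ (k * Z ^ p) ^ 2 := Nat.le_self_pow two_ne_zero _
      _ ≤ b * (k * Z ^ p) ^ 2 := Nat.le_mul_of_pos_left _ hb
      _ ≤ c * H ^ 3 := h ▸ Nat.le_add_left _ _
      _ ≤ N := hN p k G H Z hp hk hkm hG hZ hgcd h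
  have hpZ : p < Z ^ p := Nat.lt_pow_self (by omega)
  omega

end GeneralizedFermat

section CubicForm

/-- The cubic form in the denominator of the `j`-map of `X_ns⁺(7)`. -/
def nsCubic {R : Type*} [CommRing R] (x y : R) : R :=
  x ^ 3 - 7 * x ^ 2 * y + 7 * x * y ^ 2 + 7 * y ^ 3

/-- The Hessian covariant of `nsCubic`, scaled to be monic in `x`. -/
def nsHessian {R : Type*} [CommRing R] (x y : R) : R :=
  x ^ 2 - 4 * x * y + 7 * y ^ 2

/-- The cubic covariant of `nsCubic` (the Jacobian of the form and its Hessian), scaled to be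
monic in `x`. -/
def nsJacobian {R : Type*} [CommRing R] (x y : R) : R :=
  x ^ 3 + 21 * x ^ 2 * y - 105 * x * y ^ 2 + 91 * y ^ 3

lemma nsJacobian_sq_add_nsCubic_sq {R : Type*} [CommRing R] (x y : R) :
    nsJacobian x y ^ 2 + 27 * nsCubic x y ^ 2 = 28 * nsHessian x y ^ 3 := by
  unfold nsJacobian nsCubic nsHessian
  ring

lemma nsHessian_nonneg {R : Type*} [CommRing R] [LinearOrder R] [IsStrictOrderedRing R] (x y : R) :
    0 ≤ nsHessian x y := by
  have hsq : nsHessian x y = (x - 2 * y) ^ 2 + 3 * y ^ 2 := by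
    unfold nsHessian
    ring
  rw [hsq]
  positivity

lemma natAbs_nsJacobian_sq_add_natAbs_nsCubic_sq (x y : ℤ) :
    (nsJacobian x y).natAbs ^ 2 + 27 * (nsCubic x y).natAbs ^ 2 =
      28 * (nsHessian x y).natAbs ^ 3 := by
  zify
  rw [sq_abs, sq_abs, abs_of_nonneg (nsHessian_nonneg x y)]
  exact nsJacobian_sq_add_nsCubic_sq x y

lemma eisenstein_cubic_ne_zero {R : Type*} [CommRing R] [IsDomain R] {q a b c x y : R}
    (hq : Prime q) (hc : ¬ q ∣ c) (hxy : IsCoprime x y) :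
    x ^ 3 + q * (a * x ^ 2 * y + b * x * y ^ 2 + c * y ^ 3) ≠ 0 := by
  intro h
  have hx : q ∣ x ^ 3 := ⟨-(a * x ^ 2 * y + b * x * y ^ 2 + c * y ^ 3), by linear_combination h⟩
  obtain ⟨t, rfl⟩ : q ∣ x := hq.dvd_of_dvd_pow hx
  have hcy : q ∣ c * y ^ 3 :=
    ⟨-(q * t ^ 3 + a * q * t ^ 2 * y + b * t * y ^ 2),
      mul_left_cancel₀ hq.ne_zero (by linear_combination h)⟩
  have hy : q ∣ y := hq.dvd_of_dvd_pow ((hq.dvd_or_dvd hcy).resolve_left hc)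
  exact hq.not_isUnit (hxy.isUnit_of_dvd' (dvd_mul_right q t) hy)

section Int

variable {x y : ℤ}

lemma nsCubic_ne_zero (hxy : IsCoprime x y) : nsCubic x y ≠ 0 := by
  have h := eisenstein_cubic_ne_zero (a := -1) (b := 1) (c := 1)
    (by norm_num : Prime (7 : ℤ)) (by norm_num) hxy
  convert h using 1
  unfold nsCubic
  ring

lemma nsJacobian_ne_zero (hxy : IsCoprime x y) : nsJacobian x y ≠ 0 := by
  have h := eisenstein_cubic_ne_zero (a := 3) (b := -15) (c := 13)
    (by norm_num : Prime (7 : ℤ)) (by norm_num) hxy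
  convert h using 1
  unfold nsJacobian
  ring

lemma gcd_nsCubic_nsHessian_dvd (hxy : IsCoprime x y) :
    Int.gcd (nsCubic x y) (nsHessian x y) ∣ 112 := by
  have hcubic : (Int.gcd (nsCubic x y) (nsHessian x y) : ℤ) ∣ nsCubic x y := Int.gcd_dvd_left ..
  have hhess : (Int.gcd (nsCubic x y) (nsHessian x y) : ℤ) ∣ nsHessian x y := Int.gcd_dvd_right ..
  have hcop : IsCoprime (nsHessian x y) (y ^ 4) := by
    have h : IsCoprime (x ^ 2 + y * (7 * y - 4 * x)) y := hxy.pow_left.add_mul_left_left _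
    convert h.pow_right using 1
    unfold nsHessian
    ring
  have helim : 112 * y ^ 4 = (36 * y ^ 2 - (3 * x - 5 * y) * (x - 3 * y)) * nsHessian x y +
      (3 * x - 5 * y) * nsCubic x y := by
    unfold nsCubic nsHessian
    ring
  have hdvd : (Int.gcd (nsCubic x y) (nsHessian x y) : ℤ) ∣ 112 * y ^ 4 :=
    helim ▸ dvd_add (hhess.mul_left _) (hcubic.mul_left _)
  exact_mod_cast (hcop.of_isCoprime_of_dvd_left hhess).dvd_of_dvd_mul_right hdvd

end Int

end CubicForm

theorem abc_implies_trivial_solutions_general {ε : ℝ} (habc : ABCBound ε) (hε : 0 < ε)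
    (hε' : ε < 1 / 5) (m : ℕ) :
    ∃ N : ℕ, ∀ p : ℕ, N < p → ∀ k : ℤ, k ≠ 0 → |k| ≤ m → ∀ x y z : ℤ, IsCoprime x y →
      nsCubic x y = k * z ^ p → z = 1 ∨ z = -1 := by
  obtain ⟨N, hN⟩ := habc.exists_forall_generalizedFermat_eq_one hε hε' one_pos
    (by norm_num : 0 < 27) 28 112 m
  refine ⟨N, fun p hp k hk hkm x y z hxy hsol ↦ Int.natAbs_eq_iff.1 ?_⟩
  have hz : z ≠ 0 := by
    rintro rfl
    exact nsCubic_ne_zero hxy (by rw [hsol, zero_pow (by omega), mul_zero])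
  have hcubic : (nsCubic x y).natAbs = k.natAbs * z.natAbs ^ p := by
    rw [hsol, Int.natAbs_mul, Int.natAbs_pow]
  refine hN p k.natAbs (nsJacobian x y).natAbs (nsHessian x y).natAbs z.natAbs hp
    (Int.natAbs_pos.2 hk) (by zify; exact hkm) (Int.natAbs_pos.2 (nsJacobian_ne_zero hxy))
    (Int.natAbs_pos.2 hz) ?_ ?_
  · rw [← hcubic]
    exact Nat.le_of_dvd (by norm_num) (gcd_nsCubic_nsHessian_dvd hxy)
  · rw [← hcubic, one_mul]
    exact natAbs_nsJacobian_sq_add_natAbs_nsCubic_sq x y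

/-- Assuming the abc conjecture, for all sufficiently large primes `p`, every coprime
integer solution of `x³ − 7x²y + 7xy² + 7y³ = k·z^p` with `k ∈ {1, 7, 8, 56}`
has `z = ±1`. -/
theorem abc_implies_trivial_solutions
    (habc : ∀ ε : ℝ, 0 < ε → ∃ K : ℝ, 0 < K ∧ ∀ A B : ℕ, 0 < A → 0 < B →
      Nat.Coprime A B →
      ((A + B : ℕ) : ℝ) ≤
        K * ((∏ q ∈ (A * B * (A + B)).primeFactors, q : ℕ) : ℝ) ^ ((1 : ℝ) + ε)) :
    ∃ N : ℕ, ∀ p : ℕ, p.Prime → N < p →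
      ∀ k : ℤ, (k = 1 ∨ k = 7 ∨ k = 8 ∨ k = 56) →
      ∀ x y z : ℤ, Int.gcd x y = 1 →
        x ^ 3 - 7 * x ^ 2 * y + 7 * x * y ^ 2 + 7 * y ^ 3 = k * z ^ p →
        z = 1 ∨ z = -1 := by
  have hbound : ABCBound (1 / 6) := by
    simpa only [ABCBound, Nat.radical_eq_prod_primeFactors] using habc (1 / 6) (by norm_num)
  obtain ⟨N, hN⟩ := abc_implies_trivial_solutions_general hbound (by norm_num) (by norm_num) 56
  exact ⟨N, fun p _ hp k hk x y z hxy ↦ hN p hp k (by omega) (by rw [abs_le]; omega) x y z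
    (Int.isCoprime_iff_gcd_eq_one.2 hxy)⟩
end
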